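/- arXiv:1504.05405 — 3 statements merged into one kernel-verified Lean document; each statement's English description precedes it below -/
import Mathlib

section
/- For every dimension d ≥ 1, every α ∈ [0,1) and every η ∈ {−1,0,+1}^d there exists a critical probability p_L(α,d,η) ∈ (0,1) such that for all p ∈ [0, p_L(α,d,η)) one has P_p(LIP(∇^{α,d}_η)) = P_p(LIP^{α,d}_η) = 0, while for all p ∈ (p_L(α,d,η), 1] one has P_p(LIP(∇^{α,d}_η)) = P_p(LIP^{α,d}_η) = 1. In particular, Lipschitz percolation above the tilted plane and above the inverted pyramid undergo a nontrivial phase transition at the same critical probability. -/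
open MeasureTheory Filter ENNReal

/-- Sites of `ℤ^{d+1}`. -/
abbrev Site (d : ℕ) := Fin (d + 1) → ℤ

/-- Site-percolation configurations on `ℤ^{d+1}`: a site is open iff its value is `true`. -/
abbrev Config (d : ℕ) := Site d → Bool

/-- `P` is the i.i.d. Bernoulli(`p`) product measure on `{0,1}^ι`: it is a probability
measure whose cylinder events have the correct product probabilities. -/
def IsBernoulli {ι : Type*} (p : ℝ) (P : Measure (ι → Bool)) : Prop :=
  IsProbabilityMeasure P ∧
    ∀ (s : Finset ι) (f : ι → Bool),
      P {ω | ∀ x ∈ s, ω x = f x} =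
        ∏ x ∈ s, (if f x then ENNReal.ofReal p else ENNReal.ofReal (1 - p))

/-- A function `F : ℤ^d → ℤ` is Lipschitz: `‖x − y‖₁ = 1 → |F x − F y| ≤ 1`. -/
def IsLipschitzFn {d : ℕ} (F : (Fin d → ℤ) → ℤ) : Prop :=
  ∀ x y : Fin d → ℤ, (∑ i, |x i - y i|) = 1 → |F x - F y| ≤ 1

/-- Height `⌊α ∑ᵢ ηᵢ xᵢ⌋` of the tilted plane `L^{α,d}_η` above `x ∈ ℤ^d`. -/
noncomputable def planeHt (α : ℝ) {d : ℕ} (η x : Fin d → ℤ) : ℤ :=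
  ⌊α * ∑ i, (η i : ℝ) * (x i : ℝ)⌋

/-- `η ∈ {-1,0,1}^d`. -/
def IsSign {d : ℕ} (η : Fin d → ℤ) : Prop := ∀ i, η i = -1 ∨ η i = 0 ∨ η i = 1

/-- The event `LIP^{α,d}_η` that there is an open Lipschitz surface lying (strictly) above
the tilted plane `L^{α,d}_η`. -/
def LIP (α : ℝ) {d : ℕ} (η : Fin d → ℤ) : Set (Config d) :=
  {ω | ∃ F : (Fin d → ℤ) → ℤ, IsLipschitzFn F ∧
    ∀ x : Fin d → ℤ, ω (Fin.snoc x (F x)) = true ∧ planeHt α η x < F x}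

/-- `pc` is the critical probability `p_L(α,d,η)` of Lipschitz percolation above the tilted
plane `L^{α,d}_η`: `pc ∈ (0,1)`, for `p` below it there is `P_p`-a.s. no open Lipschitz
surface above the plane, and for `p` above it there `P_p`-a.s. is one.
(Here `P p` is the Bernoulli(`p`) product measure on `{0,1}^{ℤ^{d+1}}`.) -/
def IsCriticalProb {d : ℕ} (P : ℝ → Measure (Config d)) (α : ℝ) (η : Fin d → ℤ)
    (pc : ℝ) : Prop :=
  pc ∈ Set.Ioo (0 : ℝ) 1 ∧
    (∀ p, 0 ≤ p → p < pc → P p (LIP α η) = 0) ∧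
    (∀ p, pc < p → p ≤ 1 → P p (LIP α η) = 1)

/-- The canonical direction vector `η ∈ {-1,0,1}^d` with `k` entries equal to `1`; the
critical probability `p_L(α,d,η)` depends on `η` only through `k = ‖η‖₁`, and
`p_L(α,d,k)` denotes the common value. -/
def etaK (d k : ℕ) : Fin d → ℤ := fun i => if (i : ℕ) < k then 1 else 0

/-- Height of the inverted pyramid `∇^{α,d}_η` above `x ∈ ℤ^d`:
the maximum of `⌊α ∑ᵢ η'ᵢ xᵢ⌋` over all `η' ∈ {-1,0,1}^d` with `‖η'‖₁ = ‖η‖₁`. -/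
noncomputable def pyrHt (α : ℝ) {d : ℕ} (η x : Fin d → ℤ) : ℤ :=
  sSup {h : ℤ | ∃ η' : Fin d → ℤ, IsSign η' ∧ (∑ i, |η' i|) = (∑ i, |η i|) ∧
    h = planeHt α η' x}

/-- The event `LIP(∇^{α,d}_η)` that there is an open Lipschitz surface lying (strictly)
above the inverted pyramid `∇^{α,d}_η`. -/
def LIPpyr (α : ℝ) {d : ℕ} (η : Fin d → ℤ) : Set (Config d) :=
  {ω | ∃ F : (Fin d → ℤ) → ℤ, IsLipschitzFn F ∧
    ∀ x : Fin d → ℤ, ω (Fin.snoc x (F x)) = true ∧ pyrHt α η x < F x}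

/-! Call a site `(x, h)` reachable if it is the end of a path that starts on or below the plane and
takes steps up onto closed sites and diagonal steps down. Such a path cannot cross an open Lipschitz
surface; conversely, the sites just above the highest reachable ones form such a surface. So it
exists if and only if the reachable heights are bounded over every `x`. Since the slope `α` is
smaller than `1`, a path that gains height must step up onto closed sites at a positive rate, and
counting the shortest paths shows that the surface exists for `p` close to `1`. For `p < 1/3` there
is none: over a half-line, the expected number of open Lipschitz paths of length `n` from a given
site is at most `(3p)^n`. A 0–1 law and monotonicity in `p` then give the critical probability.

The planes of the pyramid are images of one another under signed permutations of the coordinates,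
so they all have the same critical probability. Above it, almost surely each of them lies below an
open Lipschitz surface, and the maximum of these finitely many surfaces lies above the pyramid. -/

open ProbabilityTheory
open scoped unitInterval

section ProductMeasure

lemma infinitePi_eq_zero_or_one {ι : Type*} {X : ι → Type*} [∀ i, MeasurableSpace (X i)]
    (μ : ∀ i, Measure (X i)) [∀ i, IsProbabilityMeasure (μ i)] {A : Set (∀ i, X i)}
    (hA : MeasurableSet A)
    (htail : ∀ ω ω' : ∀ i, X i, {i | ω i ≠ ω' i}.Finite → ω ∈ A → ω' ∈ A) :
    Measure.infinitePi μ A = 0 ∨ Measure.infinitePi μ A = 1 := by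
  classical
  refine measure_zero_or_one_of_measurableSet_limsup
    (s := fun i => MeasurableSpace.comap (fun ω : ∀ i, X i => ω i) inferInstance)
    (f := cofinite) (p := Set.Finite) (ns := fun s : Finset ι => (s : Set ι))
    (fun i => (measurable_pi_apply i).comap_le) (iIndepFun_infinitePi fun _ => measurable_id)
    (fun t ht => by simpa using ht) (fun s t => ⟨s ∪ t, by simp, by simp⟩)
    Finset.finite_toSet (fun i => ⟨{i}, by simp⟩) ?_
  rw [limsup_eq_iInf_iSup, MeasurableSpace.measurableSet_iInf]
  intro T
  rw [MeasurableSpace.measurableSet_iInf]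
  intro hT
  obtain ⟨ω₀⟩ := nonempty_of_isProbabilityMeasure (Measure.infinitePi μ)
  -- `A` is invariant under freezing the finitely many coordinates outside `T`.
  let freeze : (∀ i, X i) → ∀ i, X i := fun ω => T.piecewise ω ω₀
  have hfreeze : Measurable[⨆ i ∈ T,
      MeasurableSpace.comap (fun ω : ∀ i, X i => ω i) inferInstance] freeze := by
    refine @measurable_pi_lambda _ _ _ (_) _ _ fun i => ?_
    by_cases hi : i ∈ T
    · simpa only [freeze, Set.piecewise_eq_of_mem _ _ _ hi] using
        measurable_iff_comap_le.2 (le_iSup₂_of_le i hi le_rfl)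
    · simpa only [freeze, Set.piecewise_eq_of_notMem _ _ _ hi] using measurable_const
  have hne (ω : ∀ i, X i) : {i | freeze ω i ≠ ω i} ⊆ Tᶜ := fun i hi hiT =>
    hi (Set.piecewise_eq_of_mem _ _ _ hiT)
  have hpre : freeze ⁻¹' A = A := by
    ext ω
    have hfin : {i | freeze ω i ≠ ω i}.Finite := Set.Finite.subset hT (hne ω)
    exact ⟨htail _ _ hfin, htail _ _ (by simpa only [ne_comm] using hfin)⟩
  exact hpre ▸ hfreeze hA

lemma measurePreserving_infinitePi_comp_equiv {ι ι' X : Type*} [MeasurableSpace X]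
    (ν : Measure X) [IsProbabilityMeasure ν] (e : ι' ≃ ι) :
    MeasurePreserving (fun ω : ι → X => ω ∘ e) (Measure.infinitePi fun _ => ν)
      (Measure.infinitePi fun _ => ν) where
  measurable := by fun_prop
  map_eq := by
    rw [← Measure.infinitePi_map_piCongrLeft (X := fun _ : ι' => X) (fun _ => ν) e.symm]
    congr 1
    ext ω i
    obtain ⟨j, rfl⟩ := e.symm.surjective i
    rw [MeasurableEquiv.coe_piCongrLeft, Equiv.piCongrLeft_apply_apply]
    simp

lemma measure_iUnion_vector_le {Ω S : Type*} [MeasurableSpace Ω] (μ : Measure Ω)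
    [Fintype S] {n : ℕ} {A : List.Vector S n → Set Ω} {r : ℝ≥0∞} (hA : ∀ w, μ (A w) ≤ r ^ n) :
    μ (⋃ w, A w) ≤ (Fintype.card S * r) ^ n := by
  calc μ (⋃ w, A w) ≤ ∑ w, μ (A w) := measure_iUnion_fintype_le _ _
    _ ≤ ∑ _w : List.Vector S n, r ^ n := Finset.sum_le_sum fun w _ => hA w
    _ = (Fintype.card S * r) ^ n := by simp [card_vector, mul_pow]

end ProductMeasure

section Bernoulli

variable {ι : Type*} {p : I}

/-- The Bernoulli(`p`) product measure on `{0,1}^ι`, built as an `infinitePi`: the only measure that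
satisfies `IsBernoulli p`. The parameter ranges over the unit interval `I`. -/
noncomputable def bernoulliProduct (ι : Type*) (p : I) : Measure (ι → Bool) :=
  Measure.infinitePi fun _ => bernoulliMeasure true false p

instance : IsProbabilityMeasure (bernoulliProduct ι p) := by
  unfold bernoulliProduct
  infer_instance

lemma bernoulliMeasure_true_false_singleton (p : I) (b : Bool) :
    bernoulliMeasure true false p {b} =
      if b then ENNReal.ofReal p else ENNReal.ofReal (1 - p) := by
  cases b
  · simp [ENNReal.ofReal, Real.toNNReal_of_nonneg, p.2.2]
    rfl
  · simp [ENNReal.ofReal, Real.toNNReal_of_nonneg, p.2.1]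
    rfl

lemma IsBernoulli.eq_bernoulliProduct {P : Measure (ι → Bool)} (hP : IsBernoulli p P) :
    P = bernoulliProduct ι p := by
  classical
  have := hP.1
  refine IsProjectiveLimit.unique (fun s => Measure.ext_of_singleton fun f => ?_)
    (Measure.isProjectiveLimit_infinitePi fun _ => bernoulliMeasure true false p)
  let g : ι → Bool := fun i => if h : i ∈ s then f ⟨i, h⟩ else true
  have hg (i : s) : g i = f i := by simp [g]
  have hcyl : s.restrict (π := fun _ => Bool) ⁻¹' {f} = {ω : ι → Bool | ∀ i ∈ s, ω i = g i} := by
    ext ω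
    simp [funext_iff, ← hg]
  rw [Measure.map_apply (by fun_prop) (measurableSet_singleton f), hcyl, hP.2,
    Measure.pi_singleton, ← Finset.prod_coe_sort]
  simp only [hg, bernoulliMeasure_true_false_singleton]

lemma bernoulliProduct_forall_mem_eq {l : List ι} (hl : l.Nodup) (b : Bool) :
    bernoulliProduct ι p {ω | ∀ x ∈ l, ω x = b} =
      (if b then ENNReal.ofReal p else ENNReal.ofReal (1 - p)) ^ l.length := by
  classical
  have hset : {ω : ι → Bool | ∀ x ∈ l, ω x = b} = Set.pi l.toFinset fun _ => {b} := by
    ext ω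
    simp [Set.mem_pi]
  rw [hset, bernoulliProduct, Measure.infinitePi_pi _ fun _ _ => measurableSet_singleton _,
    Finset.prod_const, List.toFinset_card_of_nodup hl, bernoulliMeasure_true_false_singleton]

lemma measurable_decide_le (p : I) : Measurable fun u : I => decide (u ≤ p) :=
  measurable_to_bool <| by
    simpa only [Set.preimage, Set.mem_singleton_iff, decide_eq_true_eq, Set.Iic_def] using
      measurableSet_Iic

lemma map_volume_decide_le (p : I) :
    (volume : Measure I).map (fun u => decide (u ≤ p)) = bernoulliMeasure true false p := by
  refine Measure.ext_of_singleton fun b => ?_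
  rw [Measure.map_apply (measurable_decide_le p) (measurableSet_singleton b),
    bernoulliMeasure_true_false_singleton]
  cases b
  · simpa [Set.preimage, Set.Ioi] using unitInterval.volume_Ioi p
  · simpa [Set.preimage, Set.Iic] using unitInterval.volume_Iic p

-- Monotone coupling: all the product measures are images of one family of uniform variables.
lemma bernoulliProduct_mono {A : Set (ι → Bool)} (hA : MeasurableSet A) (hA' : IsUpperSet A) :
    Monotone fun p => bernoulliProduct ι p A := by
  intro p q hpq
  have hmap (p : I) : (Measure.infinitePi fun _ : ι => (volume : Measure I)).map
      (fun u i => decide (u i ≤ p)) = bernoulliProduct ι p := by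
    rw [Measure.infinitePi_map_pi (fun _ => (volume : Measure I)) fun _ => measurable_decide_le p]
    simp only [map_volume_decide_le, bernoulliProduct]
  have hmeas (p : I) : Measurable fun (u : ι → I) i => decide (u i ≤ p) :=
    measurable_pi_lambda _ fun i => (measurable_decide_le p).comp (measurable_pi_apply i)
  simp only [← hmap, Measure.map_apply (hmeas _) hA]
  refine measure_mono fun u hu => hA' (fun i => ?_) hu
  simpa [Bool.le_iff_imp] using fun h : u i ≤ p => h.trans hpq

end Bernoulli

lemma exists_threshold_of_isLowerSet {β : Type*} [ConditionallyCompleteLinearOrder β]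
    {Z : Set β} (hZ : IsLowerSet Z) {a b : β} (ha : a ∈ Z) (hb : b ∉ Z) :
    ∃ c ∈ Set.Icc a b, (∀ p < c, p ∈ Z) ∧ ∀ p, c < p → p ∉ Z := by
  have hle : ∀ p ∈ Z, p ≤ b := fun p hp => le_of_not_ge fun hbp => hb (hZ hbp hp)
  refine ⟨sSup Z, ⟨le_csSup ⟨b, hle⟩ ha, csSup_le ⟨a, ha⟩ hle⟩, fun p hp => ?_,
    fun p hp => notMem_of_csSup_lt hp ⟨b, hle⟩⟩
  obtain ⟨q, hq, hpq⟩ := exists_lt_of_lt_csSup ⟨a, ha⟩ hp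
  exact hZ hpq.le hq

section Reachability

variable {d : ℕ} {g : (Fin d → ℤ) → ℤ} {ω : Config d} {x y : Fin d → ℤ} {h : ℤ}

/-- The event that there is an open Lipschitz surface strictly above the graph of `g`. -/
def lipAbove (g : (Fin d → ℤ) → ℤ) : Set (Config d) :=
  {ω | ∃ F : (Fin d → ℤ) → ℤ, IsLipschitzFn F ∧
    ∀ x : Fin d → ℤ, ω (Fin.snoc x (F x)) = true ∧ g x < F x}

lemma isUpperSet_lipAbove (g : (Fin d → ℤ) → ℤ) : IsUpperSet (lipAbove g) :=
  fun _ _ hωω' ⟨F, hF, hω⟩ => ⟨F, hF, fun x => ⟨hωω' _ (hω x).1, (hω x).2⟩⟩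

lemma antitone_lipAbove : Antitone (lipAbove (d := d)) :=
  fun _ _ hg _ ⟨F, hF, hω⟩ => ⟨F, hF, fun x => ⟨(hω x).1, (hg x).trans_lt (hω x).2⟩⟩

/-- The unit vectors of `ℤ^d` for the `ℓ¹` norm. -/
abbrev UnitVector (d : ℕ) := {v : Fin d → ℤ // ∑ i, |v i| = 1}

lemma finite_unitVector (d : ℕ) : {v : Fin d → ℤ | ∑ i, |v i| = 1}.Finite := by
  refine (Set.finite_Icc (fun _ : Fin d => (-1 : ℤ)) fun _ => 1).subset fun v hv => ?_
  have hle (i : Fin d) : |v i| ≤ 1 :=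
    (Finset.single_le_sum (fun j _ => abs_nonneg (v j)) (Finset.mem_univ i)).trans_eq hv
  exact ⟨fun i => (abs_le.1 (hle i)).1, fun i => (abs_le.1 (hle i)).2⟩

noncomputable instance UnitVector.fintype (d : ℕ) : Fintype (UnitVector d) :=
  (finite_unitVector d).fintype

/-- The steps of a path in `ℤ^{d+1}`: `none` is a step up, from `(x, h)` to `(x, h + 1)`, and
`some v` is a diagonal step down, from `(x, h)` to `(x + v, h - 1)`. -/
abbrev Step (d : ℕ) := Option (UnitVector d)

/-- The list of steps `w`, traced backwards from its endpoint `(x, h)`, is an admissible path: it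
starts at or below the graph of `g`, and every step up arrives at a closed site. -/
def IsAdmissible (g : (Fin d → ℤ) → ℤ) (ω : Config d) :
    (Fin d → ℤ) → ℤ → List (Step d) → Prop
  | x, h, [] => h ≤ g x
  | x, h, none :: w => ω (Fin.snoc x h) = false ∧ IsAdmissible g ω x (h - 1) w
  | x, h, some v :: w => IsAdmissible g ω (x - v) (h + 1) w

/-- The event that some admissible path arrives at `(x, h)`. -/
def reachable (g : (Fin d → ℤ) → ℤ) (x : Fin d → ℤ) (h : ℤ) : Set (Config d) :=
  {ω | ∃ w, IsAdmissible g ω x h w}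

lemma mem_reachable_of_le (hh : h ≤ g x) : ω ∈ reachable g x h := ⟨[], hh⟩

lemma mem_reachable_add_one (hω : ω ∈ reachable g x h) (hcl : ω (Fin.snoc x (h + 1)) = false) :
    ω ∈ reachable g x (h + 1) := by
  obtain ⟨w, hw⟩ := hω
  exact ⟨none :: w, hcl, by simpa using hw⟩

lemma mem_reachable_sub_one (hω : ω ∈ reachable g x h) (hxy : ∑ i, |y i - x i| = 1) :
    ω ∈ reachable g y (h - 1) := by
  obtain ⟨w, hw⟩ := hω
  exact ⟨some ⟨y - x, hxy⟩ :: w, by simpa [IsAdmissible] using hw⟩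

lemma lt_of_isAdmissible {F : (Fin d → ℤ) → ℤ} (hF : IsLipschitzFn F)
    (hω : ∀ x, ω (Fin.snoc x (F x)) = true ∧ g x < F x) {w : List (Step d)}
    (hw : IsAdmissible g ω x h w) : h < F x := by
  induction w generalizing x h with
  | nil => exact hw.trans_lt (hω x).2
  | cons a w ih =>
    rcases a with _ | v
    · have hne : h ≠ F x := by
        rintro rfl
        exact Bool.false_ne_true (hw.1.symm.trans (hω x).1)
      have := ih hw.2
      omega
    · have hstep := abs_le.1 (hF (x - v) x (by simpa using v.2))
      have := ih hw
      omega

lemma mem_lipAbove_iff : ω ∈ lipAbove g ↔ ∀ x, BddAbove {h | ω ∈ reachable g x h} := by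
  constructor
  · rintro ⟨F, hF, hω⟩ x
    exact ⟨F x, fun h ⟨w, hw⟩ => (lt_of_isAdmissible hF hω hw).le⟩
  · intro hbdd
    set G : (Fin d → ℤ) → ℤ := fun x => sSup {h | ω ∈ reachable g x h}
    have hmem (x) : ω ∈ reachable g x (G x) :=
      Int.csSup_mem ⟨g x, mem_reachable_of_le le_rfl⟩ (hbdd x)
    have hle {x h} (hω : ω ∈ reachable g x h) : h ≤ G x := le_csSup (hbdd x) hω
    refine ⟨fun x => G x + 1, fun x y hxy => ?_, fun x => ⟨?_, ?_⟩⟩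
    · have hx := hle (mem_reachable_sub_one (hmem y) hxy)
      have hy := hle (mem_reachable_sub_one (hmem x) (by simpa only [abs_sub_comm] using hxy))
      rw [add_sub_add_right_eq_sub, abs_le]
      omega
    · by_contra hcl
      have := hle (mem_reachable_add_one (hmem x) (by simpa using hcl))
      omega
    · exact Int.lt_add_one_iff.2 (hle (mem_reachable_of_le le_rfl))

lemma measurableSet_isAdmissible (g : (Fin d → ℤ) → ℤ) (x : Fin d → ℤ) (h : ℤ)
    (w : List (Step d)) : MeasurableSet {ω : Config d | IsAdmissible g ω x h w} := by
  induction w generalizing x h with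
  | nil => exact MeasurableSet.const _
  | cons a w ih =>
    rcases a with _ | v
    · exact (measurable_pi_apply (X := fun _ : Site d => Bool) (Fin.snoc x h)
        (measurableSet_singleton false)).inter (ih x (h - 1))
    · exact ih (x - v) (h + 1)

lemma measurableSet_reachable (g : (Fin d → ℤ) → ℤ) (x : Fin d → ℤ) (h : ℤ) :
    MeasurableSet (reachable g x h) := by
  simpa only [reachable, Set.ofPred_exists] using
    MeasurableSet.iUnion (measurableSet_isAdmissible g x h)

lemma measurableSet_lipAbove (g : (Fin d → ℤ) → ℤ) : MeasurableSet (lipAbove g) := by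
  have heq : lipAbove g = ⋂ x, ⋃ M : ℤ, ⋂ h : ℤ, {ω | ω ∈ reachable g x h → h ≤ M} := by
    ext ω
    simp [mem_lipAbove_iff, BddAbove, Set.Nonempty, mem_upperBounds]
  rw [heq]
  exact MeasurableSet.iInter fun x => MeasurableSet.iUnion fun M => MeasurableSet.iInter fun h =>
    (measurableSet_reachable g x h).imp (MeasurableSet.const _)

end Reachability

section Invariance

variable {d : ℕ} {p : I}

/-- The product of a bijection of `ℤ^d` and a bijection of `ℤ`, acting on the sites `(x, h)`. -/
def siteEquiv (T : Equiv.Perm (Fin d → ℤ)) (S : Equiv.Perm ℤ) : Equiv.Perm (Site d) :=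
  (Fin.snocEquiv fun _ => ℤ).symm.trans ((S.prodCongr T).trans (Fin.snocEquiv fun _ => ℤ))

lemma siteEquiv_snoc (T : Equiv.Perm (Fin d → ℤ)) (S : Equiv.Perm ℤ) (x : Fin d → ℤ) (h : ℤ) :
    siteEquiv T S (Fin.snoc x h) = Fin.snoc (T x) (S h) := by
  simp [siteEquiv, Fin.snocEquiv, Fin.init_snoc]

lemma lipAbove_comp_add {T : Equiv.Perm (Fin d → ℤ)}
    (hT : ∀ x y, ∑ i, |T x i - T y i| = ∑ i, |x i - y i|) (g : (Fin d → ℤ) → ℤ) (m : ℤ) :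
    (lipAbove fun x => g (T x) + m) =
      (fun ω => ω ∘ siteEquiv T.symm (Equiv.addRight m)) ⁻¹' lipAbove g := by
  ext ω
  constructor
  · rintro ⟨F, hF, hω⟩
    refine ⟨fun y => F (T.symm y) - m, fun x y hxy => ?_, fun y => ⟨?_, ?_⟩⟩
    · have hdist := hT (T.symm x) (T.symm y)
      simp only [Equiv.apply_symm_apply] at hdist
      simpa using hF (T.symm x) (T.symm y) (hdist ▸ hxy)
    · simpa [siteEquiv_snoc] using (hω (T.symm y)).1
    · simpa [lt_sub_iff_add_lt] using (hω (T.symm y)).2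
  · rintro ⟨F, hF, hω⟩
    refine ⟨fun x => F (T x) + m, fun x y hxy => ?_, fun x => ⟨?_, ?_⟩⟩
    · simpa using hF (T x) (T y) ((hT x y).trans hxy)
    · simpa [siteEquiv_snoc] using (hω (T x)).1
    · simpa using (hω (T x)).2

lemma bernoulliProduct_lipAbove_comp_add {T : Equiv.Perm (Fin d → ℤ)}
    (hT : ∀ x y, ∑ i, |T x i - T y i| = ∑ i, |x i - y i|) (g : (Fin d → ℤ) → ℤ) (m : ℤ) :
    bernoulliProduct (Site d) p (lipAbove fun x => g (T x) + m) =
      bernoulliProduct (Site d) p (lipAbove g) := by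
  rw [lipAbove_comp_add hT]
  exact (measurePreserving_infinitePi_comp_equiv _ _).measure_preimage
    (measurableSet_lipAbove g).nullMeasurableSet

lemma bernoulliProduct_lipAbove_add (g : (Fin d → ℤ) → ℤ) (m : ℤ) :
    bernoulliProduct (Site d) p (lipAbove fun x => g x + m) =
      bernoulliProduct (Site d) p (lipAbove g) :=
  bernoulliProduct_lipAbove_comp_add (T := Equiv.refl _) (fun _ _ => rfl) g m

-- A finite change of the configuration does not affect surfaces that lie high enough.
lemma mem_iInter_lipAbove_add_of_finite {g : (Fin d → ℤ) → ℤ} {ω ω' : Config d}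
    (hfin : {z | ω z ≠ ω' z}.Finite) (hω : ω ∈ ⋂ m : ℕ, lipAbove fun x => g x + m) :
    ω' ∈ ⋂ m : ℕ, lipAbove fun x => g x + m := by
  obtain ⟨B, hB⟩ := (hfin.image fun z : Site d => z (Fin.last d) - g (Fin.init z)).bddAbove
  rw [Set.mem_iInter] at hω ⊢
  intro m
  obtain ⟨F, hF, hF'⟩ := hω (max m B.toNat)
  refine ⟨F, hF, fun x => ⟨?_, ?_⟩⟩
  · by_contra hcl
    have hne : ω (Fin.snoc x (F x)) ≠ ω' (Fin.snoc x (F x)) := fun h => hcl (h ▸ (hF' x).1)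
    have := hB ⟨_, hne, rfl⟩
    have := (hF' x).2
    simp only [Fin.snoc_last, Fin.init_snoc] at *
    omega
  · have := (hF' x).2
    dsimp only at this ⊢
    omega

lemma bernoulliProduct_lipAbove_eq_zero_or_one (p : I) (g : (Fin d → ℤ) → ℤ) :
    bernoulliProduct (Site d) p (lipAbove g) = 0 ∨
      bernoulliProduct (Site d) p (lipAbove g) = 1 := by
  have hanti : Antitone fun m : ℕ => lipAbove fun x => g x + m := fun m n hmn =>
    antitone_lipAbove fun x => by dsimp only; omega
  have heq : bernoulliProduct (Site d) p (⋂ m : ℕ, lipAbove fun x => g x + m) =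
      bernoulliProduct (Site d) p (lipAbove g) := by
    rw [hanti.measure_iInter (fun m => (measurableSet_lipAbove _).nullMeasurableSet)
      ⟨0, measure_ne_top _ _⟩]
    simp only [bernoulliProduct_lipAbove_add, ciInf_const]
  rw [← heq]
  exact infinitePi_eq_zero_or_one _ (MeasurableSet.iInter fun m => measurableSet_lipAbove _)
    fun ω ω' => mem_iInter_lipAbove_add_of_finite

end Invariance

section Peierls

variable {d : ℕ} {g : (Fin d → ℤ) → ℤ} {ω : Config d} {w : List (Step d)} {x y : Fin d → ℤ}
  {h k : ℤ} {α : ℝ} {f : (Fin d → ℤ) → ℝ} {N : ℕ} {p : I} {r : ℝ≥0∞}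

/-- The sites at which the path `w` ending at `(x, h)` arrives by a step up. -/
def upSites : (Fin d → ℤ) → ℤ → List (Step d) → List (Site d)
  | _, _, [] => []
  | x, h, none :: w => Fin.snoc x h :: upSites x (h - 1) w
  | x, h, some v :: w => upSites (x - v) (h + 1) w

lemma length_upSites_le (x : Fin d → ℤ) (h : ℤ) (w : List (Step d)) :
    (upSites x h w).length ≤ w.length := by
  induction w generalizing x h with
  | nil => exact le_rfl
  | cons a w ih =>
    rcases a with _ | v
    · exact Nat.succ_le_succ (ih x (h - 1))
    · exact (ih (x - v) (h + 1)).trans (Nat.le_succ _)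

lemma IsAdmissible.eq_false_of_mem_upSites (hw : IsAdmissible g ω x h w) :
    ∀ z ∈ upSites x h w, ω z = false := by
  induction w generalizing x h with
  | nil => simp [upSites]
  | cons a w ih =>
    rcases a with _ | v
    · exact List.forall_mem_cons.2 ⟨hw.1, ih hw.2⟩
    · exact ih (x := x - v) (h := h + 1) hw

lemma IsAdmissible.exists_length_le_of_mem_upSites (hw : IsAdmissible g ω x h w)
    (hy : Fin.snoc y k ∈ upSites x h w) :
    ∃ w', IsAdmissible g ω y k w' ∧ w'.length ≤ w.length := by
  induction w generalizing x h with
  | nil => simp [upSites] at hy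
  | cons a w ih =>
    have hcons : (∃ w', IsAdmissible g ω y k w' ∧ w'.length ≤ w.length) →
        ∃ w', IsAdmissible g ω y k w' ∧ w'.length ≤ (a :: w).length :=
      fun ⟨w', hw', hlen⟩ => ⟨w', hw', hlen.trans (Nat.le_succ _)⟩
    rcases a with _ | v
    · rcases List.mem_cons.1 hy with heq | hy
      · obtain ⟨rfl, rfl⟩ := Fin.snoc_inj.1 heq
        exact ⟨none :: w, hw, le_rfl⟩
      · exact hcons (ih hw.2 hy)
    · exact hcons (ih (x := x - v) (h := h + 1) hw hy)

-- If a path steps up to the same site twice, the loop in between can be cut off.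
lemma nodup_upSites_of_minimalFor (hw : MinimalFor (IsAdmissible g ω x h) List.length w) :
    (upSites x h w).Nodup := by
  induction w generalizing x h with
  | nil => exact List.nodup_nil
  | cons a w ih =>
    rcases a with _ | v
    · refine List.nodup_cons.2 ⟨fun hmem => ?_, ih ⟨hw.1.2, fun w' hw' hle => ?_⟩⟩
      · obtain ⟨w', hw', hle⟩ := IsAdmissible.exists_length_le_of_mem_upSites hw.1.2 hmem
        exact (Nat.lt_succ_of_le hle).not_ge (hw.2 hw' (Nat.le_succ_of_le hle))
      · exact Nat.le_of_succ_le_succ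
          (hw.2 (j := none :: w') ⟨hw.1.1, hw'⟩ (Nat.succ_le_succ hle))
    · exact ih (x := x - v) (h := h + 1) ⟨hw.1, fun w' hw' hle =>
        Nat.le_of_succ_le_succ (hw.2 (j := some v :: w') hw' (Nat.succ_le_succ hle))⟩

/-- The function `f` on `ℤ^d` changes by at most `α` between nearest neighbours. -/
def HasSlopeLE (α : ℝ) (f : (Fin d → ℤ) → ℝ) : Prop :=
  ∀ x y : Fin d → ℤ, ∑ i, |x i - y i| = 1 → |f x - f y| ≤ α

-- Relative to `f`, a step up gains height `1` and a diagonal step loses at least `1 - α`.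
lemma IsAdmissible.sub_le (hf : HasSlopeLE α f) (hw : IsAdmissible (fun x => ⌊f x⌋) ω x h w) :
    h - f x ≤ (upSites x h w).length - (1 - α) * (w.length - (upSites x h w).length) := by
  induction w generalizing x h with
  | nil =>
    have := Int.le_floor.1 (show h ≤ ⌊f x⌋ from hw)
    simpa [upSites] using this
  | cons a w ih =>
    rcases a with _ | v
    · have := ih hw.2
      simp only [upSites, List.length_cons]
      push_cast at this ⊢
      linarith
    · have := ih (x := x - v) (h := h + 1) hw
      have hstep := (abs_le.1 (hf (x - v) x (by simpa using v.2))).2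
      simp only [upSites, List.length_cons]
      push_cast at this ⊢
      linarith

/-- The event that the path `w` ending at `(x, h)` steps up to distinct closed sites, at least once
in `N` steps on average. -/
def pathEvent (N : ℕ) (x : Fin d → ℤ) (h : ℤ) (w : List (Step d)) : Set (Config d) :=
  {ω | (∀ z ∈ upSites x h w, ω z = false) ∧ (upSites x h w).Nodup ∧
    w.length ≤ N * (upSites x h w).length}

lemma bernoulliProduct_pathEvent_le (hr : r ≤ 1) (hp : ENNReal.ofReal (1 - p) ≤ r ^ N)
    (x : Fin d → ℤ) (h : ℤ) (w : List (Step d)) :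
    bernoulliProduct (Site d) p (pathEvent N x h w) ≤ r ^ w.length := by
  by_cases hw : (upSites x h w).Nodup ∧ w.length ≤ N * (upSites x h w).length
  · calc bernoulliProduct (Site d) p (pathEvent N x h w)
        ≤ bernoulliProduct (Site d) p {ω | ∀ z ∈ upSites x h w, ω z = false} :=
          measure_mono fun ω hω => hω.1
      _ = ENNReal.ofReal (1 - p) ^ (upSites x h w).length := by
          rw [bernoulliProduct_forall_mem_eq hw.1, if_neg Bool.false_ne_true]
      _ ≤ r ^ (N * (upSites x h w).length) := by
          rw [pow_mul]
          gcongr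
      _ ≤ r ^ w.length := pow_le_pow_right_of_le_one' hr hw.2
  · have hempty : pathEvent N x h w = ∅ := Set.eq_empty_iff_forall_notMem.2 fun ω hω => hw hω.2
    simp [hempty]

lemma reachable_subset_iUnion_pathEvent (hf : HasSlopeLE α f) (hα : α < 1)
    (hN : 2 - α ≤ N * (1 - α)) {j : ℕ} (hj : j ≤ h - f x) :
    reachable (fun x => ⌊f x⌋) x h ⊆
      ⋃ k : ℕ, ⋃ w : List.Vector (Step d) (j + k), pathEvent N x h w.toList := by
  intro ω hω
  obtain ⟨w, hmin⟩ := exists_minimalFor_of_wellFoundedLT _ List.length hω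
  have hheight := hmin.1.sub_le hf
  have hle : ((upSites x h w).length : ℝ) ≤ w.length := by
    exact_mod_cast length_upSites_le x h w
  have hα' : 0 < 1 - α := sub_pos.2 hα
  have hjw : j ≤ w.length := by
    have := mul_nonneg hα'.le (sub_nonneg.2 hle)
    have : (j : ℝ) ≤ w.length := by linarith
    exact_mod_cast this
  have hlen : w.length ≤ N * (upSites x h w).length := by
    have hub : (1 - α) * w.length ≤ (1 - α) * (N * (upSites x h w).length) := by
      have := mul_le_mul_of_nonneg_right hN (upSites x h w).length.cast_nonneg
      have := (j.cast_nonneg : (0 : ℝ) ≤ j)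
      linarith
    exact_mod_cast le_of_mul_le_mul_left hub hα'
  obtain ⟨k, hk⟩ := Nat.exists_eq_add_of_le hjw
  exact Set.mem_iUnion₂.2 ⟨k, ⟨w, hk⟩, hmin.1.eq_false_of_mem_upSites,
    nodup_upSites_of_minimalFor hmin, hlen⟩

lemma bernoulliProduct_reachable_le (hf : HasSlopeLE α f) (hα : α < 1)
    (hN : 2 - α ≤ N * (1 - α)) (hr : r ≤ 1) (hp : ENNReal.ofReal (1 - p) ≤ r ^ N) {j : ℕ}
    (hj : j ≤ h - f x) :
    bernoulliProduct (Site d) p (reachable (fun x => ⌊f x⌋) x h) ≤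
      (Fintype.card (Step d) * r) ^ j * (1 - Fintype.card (Step d) * r)⁻¹ := by
  calc bernoulliProduct (Site d) p (reachable (fun x => ⌊f x⌋) x h)
      ≤ ∑' k : ℕ, bernoulliProduct (Site d) p
          (⋃ w : List.Vector (Step d) (j + k), pathEvent N x h w.toList) :=
        (measure_mono (reachable_subset_iUnion_pathEvent hf hα hN hj)).trans (measure_iUnion_le _)
    _ ≤ ∑' k : ℕ, (Fintype.card (Step d) * r) ^ (j + k) :=
        ENNReal.tsum_le_tsum fun k => measure_iUnion_vector_le _ fun w =>
          (bernoulliProduct_pathEvent_le hr hp x h w.toList).trans_eq (by rw [w.toList_length])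
    _ = (Fintype.card (Step d) * r) ^ j * (1 - Fintype.card (Step d) * r)⁻¹ := by
        simp only [pow_add, ENNReal.tsum_mul_left, ENNReal.tsum_geometric]

lemma ae_bddAbove_reachable (hf : HasSlopeLE α f) (hα : α < 1) (hN : 2 - α ≤ N * (1 - α))
    (hr : Fintype.card (Step d) * r < 1) (hp : ENNReal.ofReal (1 - p) ≤ r ^ N)
    (x : Fin d → ℤ) :
    ∀ᵐ ω ∂bernoulliProduct (Site d) p, BddAbove {h | ω ∈ reachable (fun x => ⌊f x⌋) x h} := by
  have hr1 : r ≤ 1 :=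
    (le_mul_of_one_le_left' (by exact_mod_cast Fintype.card_pos)).trans hr.le
  have hgeom : (1 - Fintype.card (Step d) * r)⁻¹ ≠ ∞ := by
    simpa [tsub_eq_zero_iff_le] using hr
  have hsum : ∑' j : ℕ, bernoulliProduct (Site d) p
      (reachable (fun x => ⌊f x⌋) x (⌈f x⌉ + j)) ≠ ∞ := by
    refine ne_top_of_le_ne_top ?_ (ENNReal.tsum_le_tsum fun j =>
      bernoulliProduct_reachable_le hf hα hN hr1 hp (j := j) ?_)
    · rw [ENNReal.tsum_mul_right, ENNReal.tsum_geometric]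
      exact ENNReal.mul_ne_top hgeom hgeom
    · push_cast
      linarith [Int.le_ceil (f x)]
  filter_upwards [ae_eventually_notMem hsum] with ω hω
  obtain ⟨J, hJ⟩ := eventually_atTop.1 hω
  refine ⟨⌈f x⌉ + J, fun h hh => ?_⟩
  by_contra! hlt
  obtain ⟨j, hj⟩ := Int.le.dest hlt.le
  refine hJ (J + j) (Nat.le_add_right J j) ?_
  rwa [Nat.cast_add, ← add_assoc, hj]

lemma exists_lt_one_bernoulliProduct_lipAbove_eq_one (d : ℕ) (hα : α < 1) :
    ∃ p : I, p < 1 ∧ ∀ f : (Fin d → ℤ) → ℝ, HasSlopeLE α f →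
      bernoulliProduct (Site d) p (lipAbove fun x => ⌊f x⌋) = 1 := by
  obtain ⟨N, hN⟩ := exists_nat_ge ((2 - α) / (1 - α))
  rw [div_le_iff₀ (sub_pos.2 hα)] at hN
  have hK : (1 : ℝ) ≤ Fintype.card (Step d) := by exact_mod_cast Fintype.card_pos
  let t : I := ⟨(2 * Fintype.card (Step d))⁻¹, by positivity, inv_le_one_of_one_le₀ (by linarith)⟩
  have ht : 0 < t := Subtype.coe_lt_coe.1 (show (0 : ℝ) < _ by positivity)
  have hr : Fintype.card (Step d) * ENNReal.ofReal t < 1 := by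
    rw [← ENNReal.ofReal_natCast, ← ENNReal.ofReal_mul (by positivity), ENNReal.ofReal_lt_one]
    simp only [t]
    field_simp
    norm_num
  have hp : ENNReal.ofReal (1 - σ (t ^ N)) ≤ ENNReal.ofReal t ^ N := by
    simp [ENNReal.ofReal_pow t.2.1]
  refine ⟨σ (t ^ N), unitInterval.symm_lt_comm.1 ?_, fun f hf => ?_⟩
  · simpa using pow_pos ht N
  · refine (mem_ae_iff_prob_eq_one (measurableSet_lipAbove _)).1 ?_
    filter_upwards [ae_all_iff.2 (ae_bddAbove_reachable hf hα hN hr hp)] with ω hω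
    exact mem_lipAbove_iff.2 hω

end Peierls

section LowDensity

variable {d : ℕ} {p : I}

/-- The sites visited by a path above the half-line `{x | x_i ≥ k, x_j = 0 for j ≠ i}`, starting at
height `h` over its endpoint and with successive increments of height `w`. -/
def raySites (i : Fin d) : ℤ → ℤ → List SignType → List (Site d)
  | _, _, [] => []
  | k, h, a :: w => Fin.snoc (Pi.single i k) h :: raySites i (k + 1) (h + a) w

lemma length_raySites (i : Fin d) (k h : ℤ) (w : List SignType) :
    (raySites i k h w).length = w.length := by
  induction w generalizing k h with
  | nil => rfl
  | cons a w ih => simp [raySites, ih]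

lemma le_apply_of_mem_raySites {i : Fin d} {k h : ℤ} {w : List SignType} {z : Site d}
    (hz : z ∈ raySites i k h w) : k ≤ z i.castSucc := by
  induction w generalizing k h with
  | nil => simp [raySites] at hz
  | cons a w ih =>
    rcases List.mem_cons.1 hz with rfl | hz
    · simp
    · have := ih hz
      omega

lemma nodup_raySites (i : Fin d) (k h : ℤ) (w : List SignType) : (raySites i k h w).Nodup := by
  induction w generalizing k h with
  | nil => exact List.nodup_nil
  | cons a w ih =>
    refine List.nodup_cons.2 ⟨fun hmem => ?_, ih _ _⟩
    have := le_apply_of_mem_raySites hmem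
    simp at this

lemma IsLipschitzFn.exists_signType_eq_sub {F : (Fin d → ℤ) → ℤ} (hF : IsLipschitzFn F)
    (i : Fin d) (k : ℤ) :
    ∃ a : SignType, F (Pi.single i (k + 1)) = F (Pi.single i k) + a := by
  have hdist : ∑ j, |(Pi.single i (k + 1) : Fin d → ℤ) j - (Pi.single i k : Fin d → ℤ) j| = 1 := by
    rw [Finset.sum_eq_single i] <;> simp +contextual
  rcases Int.abs_le_one_iff.1 (hF _ _ hdist) with h | h | h
  · exact ⟨0, by simpa using sub_eq_zero.1 h⟩
  · exact ⟨1, by simpa using sub_eq_iff_eq_add'.1 h⟩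
  · exact ⟨-1, by simpa using sub_eq_iff_eq_add'.1 h⟩

lemma IsLipschitzFn.exists_open_raySites {ω : Config d} {F : (Fin d → ℤ) → ℤ}
    (hF : IsLipschitzFn F) (hω : ∀ x, ω (Fin.snoc x (F x)) = true) (i : Fin d) (n : ℕ) (k : ℤ) :
    ∃ w : List.Vector SignType n,
      ∀ z ∈ raySites i k (F (Pi.single i k)) w.toList, ω z = true := by
  induction n generalizing k with
  | zero => exact ⟨List.Vector.nil, by simp [raySites]⟩
  | succ n ih =>
    obtain ⟨w, hw⟩ := ih (k + 1)
    obtain ⟨a, ha⟩ := hF.exists_signType_eq_sub i k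
    refine ⟨a ::ᵥ w, ?_⟩
    rw [List.Vector.toList_cons, raySites, ← ha]
    exact List.forall_mem_cons.2 ⟨hω _, hw⟩

lemma bernoulliProduct_exists_open_raySites_eq_zero (hp : (p : ℝ) < 1 / 3) (i : Fin d) (h : ℤ) :
    bernoulliProduct (Site d) p {ω | ∀ n, ∃ w : List.Vector SignType n,
      ∀ z ∈ raySites i 0 h w.toList, ω z = true} = 0 := by
  have hlt : Fintype.card SignType * ENNReal.ofReal p < 1 := by
    rw [show Fintype.card SignType = 3 from rfl, ← ENNReal.ofReal_natCast,
      ← ENNReal.ofReal_mul (by positivity), ENNReal.ofReal_lt_one]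
    push_cast
    linarith
  refine le_antisymm (ge_of_tendsto' (ENNReal.tendsto_pow_atTop_nhds_zero_of_lt_one hlt)
    fun n => ?_) zero_le
  calc bernoulliProduct (Site d) p {ω | ∀ n, ∃ w : List.Vector SignType n,
        ∀ z ∈ raySites i 0 h w.toList, ω z = true}
    _ ≤ bernoulliProduct (Site d) p (⋃ w : List.Vector SignType n,
        {ω | ∀ z ∈ raySites i 0 h w.toList, ω z = true}) :=
        measure_mono fun ω hω => Set.mem_iUnion.2 (hω n)
    _ ≤ (Fintype.card SignType * ENNReal.ofReal p) ^ n :=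
        measure_iUnion_vector_le _ fun w => by
          rw [bernoulliProduct_forall_mem_eq (nodup_raySites _ _ _ _), if_pos rfl,
            length_raySites, w.toList_length]

lemma bernoulliProduct_lipAbove_eq_zero (hd : 1 ≤ d) (hp : (p : ℝ) < 1 / 3)
    (g : (Fin d → ℤ) → ℤ) : bernoulliProduct (Site d) p (lipAbove g) = 0 := by
  refine measure_mono_null (fun ω ⟨F, hF, hω⟩ => Set.mem_iUnion.2 ⟨F (Pi.single ⟨0, hd⟩ 0),
    fun n => ?_⟩) (measure_iUnion_null
      (bernoulliProduct_exists_open_raySites_eq_zero hp (⟨0, hd⟩ : Fin d)))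
  exact hF.exists_open_raySites (fun x => (hω x).1) ⟨0, hd⟩ n 0

end LowDensity

section PhaseTransition

variable {d : ℕ} {α : ℝ} {f : (Fin d → ℤ) → ℝ}

lemma exists_criticalProb_lipAbove (hd : 1 ≤ d) (hα : α < 1) (hf : HasSlopeLE α f) :
    ∃ pc ∈ Set.Ioo (0 : I) 1,
      (∀ p < pc, bernoulliProduct (Site d) p (lipAbove fun x => ⌊f x⌋) = 0) ∧
      ∀ p > pc, bernoulliProduct (Site d) p (lipAbove fun x => ⌊f x⌋) = 1 := by
  let quarter : I := ⟨1 / 4, by norm_num, by norm_num⟩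
  obtain ⟨q, hq, hq1⟩ := exists_lt_one_bernoulliProduct_lipAbove_eq_one d hα
  obtain ⟨pc, ⟨hle, hge⟩, hlt, hgt⟩ := exists_threshold_of_isLowerSet
    (Z := {p : I | bernoulliProduct (Site d) p (lipAbove fun x => ⌊f x⌋) = 0})
    (fun p p' hpp' hp => le_antisymm
      ((bernoulliProduct_mono (measurableSet_lipAbove _) (isUpperSet_lipAbove _) hpp').trans_eq hp)
      zero_le)
    (bernoulliProduct_lipAbove_eq_zero hd (p := quarter) (by norm_num [quarter]) _)
    (show q ∉ _ by simp [hq1 f hf])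
  refine ⟨pc, ⟨?_, hge.trans_lt hq⟩, hlt, fun p hp =>
    (bernoulliProduct_lipAbove_eq_zero_or_one p _).resolve_left (hgt p hp)⟩
  exact lt_of_lt_of_le (Subtype.coe_lt_coe.1 (by norm_num [quarter])) hle

end PhaseTransition

section TiltedPlanes

variable {d : ℕ} {α : ℝ} {η η' : Fin d → ℤ} {p : I}

lemma IsSign.abs_eq_ite (hη : IsSign η) (i : Fin d) : |η i| = if η i ≠ 0 then 1 else 0 := by
  rcases hη i with h | h | h <;> simp [h]

lemma hasSlopeLE_plane (α : ℝ) (hη : IsSign η) :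
    HasSlopeLE |α| fun x => α * ∑ i, (η i : ℝ) * (x i : ℝ) := by
  intro x y hxy
  have hle (i : Fin d) : |η i| ≤ 1 := by
    rw [hη.abs_eq_ite]
    split_ifs <;> norm_num
  have hsum : |∑ i, η i * (x i - y i)| ≤ 1 :=
    calc |∑ i, η i * (x i - y i)| ≤ ∑ i, |η i * (x i - y i)| := Finset.abs_sum_le_sum_abs _ _
      _ ≤ ∑ i, |x i - y i| := Finset.sum_le_sum fun i _ => by
          rw [abs_mul]
          exact mul_le_of_le_one_left (abs_nonneg _) (hle i)
      _ = 1 := hxy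
  calc |α * ∑ i, (η i : ℝ) * (x i : ℝ) - α * ∑ i, (η i : ℝ) * (y i : ℝ)|
      = |α| * |∑ i, (η i : ℝ) * ((x i : ℝ) - y i)| := by
        simp only [← mul_sub, ← Finset.sum_sub_distrib, abs_mul]
    _ ≤ |α| := mul_le_of_le_one_right (abs_nonneg α) (by exact_mod_cast hsum)

lemma IsSign.exists_perm_eq_units_mul (hη : IsSign η) (hη' : IsSign η')
    (hnorm : ∑ i, |η i| = ∑ i, |η' i|) :
    ∃ (e : Equiv.Perm (Fin d)) (s : Fin d → ℤˣ), ∀ i, η i = s i * η' (e i) := by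
  have hcard : Fintype.card {i // η i ≠ 0} = Fintype.card {i // η' i ≠ 0} := by
    simp only [hη.abs_eq_ite, hη'.abs_eq_ite, Finset.sum_boole] at hnorm
    simpa only [Fintype.card_subtype] using Nat.cast_inj.1 hnorm
  let e₀ := Fintype.equivOfCardEq hcard
  let e := e₀.extendSubtype
  have hs (i : Fin d) : ∃ s : ℤˣ, η i = s * η' (e i) := by
    have hiff : η i ≠ 0 ↔ η' (e i) ≠ 0 :=
      ⟨e₀.extendSubtype_mem i, Function.mtr (e₀.extendSubtype_not_mem i)⟩
    have habs : |η i| = |η' (e i)| := by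
      simp only [hη.abs_eq_ite, hη'.abs_eq_ite, hiff]
    rcases abs_eq_abs.1 habs with h | h
    · exact ⟨1, by simpa using h⟩
    · exact ⟨-1, by simpa using h⟩
  choose s hs using hs
  exact ⟨e, s, hs⟩

/-- The signed permutation `x ↦ (s i * x (e i))_i` of the coordinates of `ℤ^d`. -/
def signedPerm (e : Equiv.Perm (Fin d)) (s : Fin d → ℤˣ) : Equiv.Perm (Fin d → ℤ) :=
  (Equiv.arrowCongr e.symm (Equiv.refl ℤ)).trans (Equiv.piCongrRight fun i => (s i).mulLeft)

lemma signedPerm_apply (e : Equiv.Perm (Fin d)) (s : Fin d → ℤˣ) (x : Fin d → ℤ) (i : Fin d) :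
    signedPerm e s x i = s i * x (e i) := rfl

lemma sum_abs_signedPerm_sub (e : Equiv.Perm (Fin d)) (s : Fin d → ℤˣ) (x y : Fin d → ℤ) :
    ∑ i, |signedPerm e s x i - signedPerm e s y i| = ∑ i, |x i - y i| := by
  rw [← Equiv.sum_comp e fun i => |x i - y i|]
  simp only [signedPerm_apply, ← mul_sub, abs_mul, Int.isUnit_iff_abs_eq.1 (s _).isUnit, one_mul]

lemma planeHt_signedPerm {e : Equiv.Perm (Fin d)} {s : Fin d → ℤˣ}
    (hs : ∀ i, η i = s i * η' (e i)) (x : Fin d → ℤ) :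
    planeHt α η (signedPerm e s x) = planeHt α η' x := by
  have hsum : ∑ i, η i * signedPerm e s x i = ∑ i, η' i * x i := by
    rw [← Equiv.sum_comp e fun i => η' i * x i]
    refine Finset.sum_congr rfl fun i _ => ?_
    rw [signedPerm_apply, hs, mul_mul_mul_comm, ← Units.val_mul, Int.units_mul_self,
      Units.val_one, one_mul]
  unfold planeHt
  exact_mod_cast congrArg (fun m : ℤ => ⌊α * m⌋) hsum

lemma bernoulliProduct_lipAbove_planeHt_congr (hη : IsSign η) (hη' : IsSign η')
    (hnorm : ∑ i, |η i| = ∑ i, |η' i|) :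
    bernoulliProduct (Site d) p (lipAbove (planeHt α η)) =
      bernoulliProduct (Site d) p (lipAbove (planeHt α η')) := by
  obtain ⟨e, s, hs⟩ := hη.exists_perm_eq_units_mul hη' hnorm
  simpa [planeHt_signedPerm hs] using
    (bernoulliProduct_lipAbove_comp_add (sum_abs_signedPerm_sub e s) (planeHt α η) 0).symm

end TiltedPlanes

section Pyramid

variable {d : ℕ} {α : ℝ} {η η' : Fin d → ℤ} {p : I}

lemma IsLipschitzFn.sup {F G : (Fin d → ℤ) → ℤ} (hF : IsLipschitzFn F) (hG : IsLipschitzFn G) :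
    IsLipschitzFn (F ⊔ G) := fun x y hxy =>
  (abs_max_sub_max_le_max (F x) (G x) (F y) (G y)).trans (max_le (hF x y hxy) (hG x y hxy))

lemma lipAbove_sup (g g' : (Fin d → ℤ) → ℤ) :
    lipAbove (g ⊔ g') = lipAbove g ∩ lipAbove g' := by
  refine Set.Subset.antisymm (Set.subset_inter (antitone_lipAbove le_sup_left)
    (antitone_lipAbove le_sup_right)) ?_
  rintro ω ⟨⟨F, hF, hω⟩, G, hG, hω'⟩
  refine ⟨F ⊔ G, hF.sup hG, fun x => ⟨?_, max_lt_max (hω x).2 (hω' x).2⟩⟩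
  rcases max_choice (F x) (G x) with h | h <;> rw [Pi.sup_apply, h]
  exacts [(hω x).1, (hω' x).1]

lemma lipAbove_finset_sup' {ι : Type*} {s : Finset ι} (hs : s.Nonempty)
    (g : ι → (Fin d → ℤ) → ℤ) : lipAbove (s.sup' hs g) = ⋂ i ∈ s, lipAbove (g i) := by
  induction hs using Finset.Nonempty.cons_induction with
  | singleton i => simp
  | cons i s hi hs ih => rw [Finset.sup'_cons hs, lipAbove_sup, ih]; simp

/-- The sign vectors with the same `ℓ¹` norm as `η`. -/
def signClass (η : Fin d → ℤ) : Finset (Fin d → ℤ) :=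
  {η' ∈ Fintype.piFinset fun _ => {-1, 0, 1} | ∑ i, |η' i| = ∑ i, |η i|}

lemma mem_signClass : η' ∈ signClass η ↔ IsSign η' ∧ ∑ i, |η' i| = ∑ i, |η i| := by
  simp [signClass, IsSign]

lemma IsSign.mem_signClass_self (hη : IsSign η) : η ∈ signClass η := mem_signClass.2 ⟨hη, rfl⟩

lemma IsSign.signClass_nonempty (hη : IsSign η) : (signClass η).Nonempty :=
  ⟨η, hη.mem_signClass_self⟩

lemma pyrHt_eq_sup' (hη : IsSign η) :
    pyrHt α η = (signClass η).sup' hη.signClass_nonempty (planeHt α) := by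
  ext x
  rw [Finset.sup'_apply, Finset.sup'_eq_csSup_image, pyrHt]
  congr 1
  ext h
  simp [mem_signClass, and_assoc, eq_comm]

lemma bernoulliProduct_LIPpyr (hη : IsSign η) :
    bernoulliProduct (Site d) p (LIPpyr α η) = bernoulliProduct (Site d) p (LIP α η) := by
  have hpyr : LIPpyr α η = ⋂ η' ∈ signClass η, lipAbove (planeHt α η') := by
    rw [← lipAbove_finset_sup' hη.signClass_nonempty, ← pyrHt_eq_sup' hη]
    rfl
  rcases bernoulliProduct_lipAbove_eq_zero_or_one p (planeHt α η) with h0 | h1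
  · refine (measure_mono_null ?_ h0).trans h0.symm
    exact hpyr ▸ Set.biInter_subset_of_mem hη.mem_signClass_self
  · refine Eq.trans ?_ h1.symm
    have hmeas (η' : Fin d → ℤ) : MeasurableSet (lipAbove (planeHt α η')) :=
      measurableSet_lipAbove _
    rw [hpyr, ← mem_ae_iff_prob_eq_one (Finset.measurableSet_biInter _ fun η' _ => hmeas η'),
      Finset.iInter_mem_sets]
    intro η' hη'
    obtain ⟨hsign, hnorm⟩ := mem_signClass.1 hη'
    rw [mem_ae_iff_prob_eq_one (hmeas η'),
      bernoulliProduct_lipAbove_planeHt_congr hsign hη hnorm, h1]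

end Pyramid

theorem phase_transition_tilted_planes_and_pyramids_general
    {d : ℕ} (hd : 1 ≤ d) (α : ℝ) (hα : |α| < 1) (η : Fin d → ℤ) (hη : IsSign η)
    (P : ℝ → Measure (Config d)) (hP : ∀ p ∈ Set.Icc (0 : ℝ) 1, IsBernoulli p (P p)) :
    ∃ pc ∈ Set.Ioo (0 : ℝ) 1,
      (∀ p, 0 ≤ p → p < pc → P p (LIPpyr α η) = 0 ∧ P p (LIP α η) = 0) ∧
      (∀ p, pc < p → p ≤ 1 → P p (LIPpyr α η) = 1 ∧ P p (LIP α η) = 1) := by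
  obtain ⟨pc, ⟨hpos, hlt⟩, hzero, hone⟩ :=
    exists_criticalProb_lipAbove hd hα (hasSlopeLE_plane α hη)
  have hprod (p : I) : P p = bernoulliProduct (Site d) p := (hP p p.2).eq_bernoulliProduct
  refine ⟨pc, ⟨hpos, hlt⟩, fun p hp0 hp => ?_, fun p hp hp1 => ?_⟩
  · rw [hprod ⟨p, hp0, hp.le.trans pc.2.2⟩, bernoulliProduct_LIPpyr hη]
    exact and_self_iff.2 (hzero _ hp)
  · rw [hprod ⟨p, pc.2.1.trans hp.le, hp1⟩, bernoulliProduct_LIPpyr hη]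
    exact and_self_iff.2 (hone _ hp)

/-- Lipschitz percolation above the tilted plane `L^{α,d}_η` and above
the inverted pyramid `∇^{α,d}_η` undergo a nontrivial phase transition at the same
critical probability `p_L(α,d,η) ∈ (0,1)`. -/
theorem phase_transition_tilted_planes_and_pyramids
    {d : ℕ} (hd : 1 ≤ d) (α : ℝ) (hα : α ∈ Set.Ico (0 : ℝ) 1)
    (η : Fin d → ℤ) (hη : IsSign η)
    (P : ℝ → Measure (Config d)) (hP : ∀ p ∈ Set.Icc (0 : ℝ) 1, IsBernoulli p (P p)) :
    ∃ pc ∈ Set.Ioo (0 : ℝ) 1,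
      (∀ p, 0 ≤ p → p < pc → P p (LIPpyr α η) = 0 ∧ P p (LIP α η) = 0) ∧
      (∀ p, pc < p → p ≤ 1 → P p (LIPpyr α η) = 1 ∧ P p (LIP α η) = 1) :=
  phase_transition_tilted_planes_and_pyramids_general hd α (abs_lt.2 ⟨by linarith [hα.1], hα.2⟩)
    η hη P hP
end

section
/- Monotonicity in the dimension: for all d ≥ 1, all α ∈ [0,1) and all k = 0,…,d, one has p_L(α,d,k) ≤ p_L(α,d+1,k). -/
open MeasureTheory Filter ENNReal

/-!
Extending by zero embeds `ℤ^d` isometrically in `ℤ^{d'}` as a coordinate subspace. Restricting a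
Lipschitz surface to this subspace gives a Lipschitz surface, and restricting the tilted plane gives
the tilted plane with the matching slopes, so an open surface in the higher dimension contains one
in the lower dimension. Restricting the environment to the sites above the subspace preserves the
Bernoulli measures, so at any `p` where surfaces almost surely do not exist in the lower dimension
they do not exist in the higher one either.
-/

section Bernoulli

variable {ι κ : Type*} {p : ℝ}

theorem restrict_preimage_singleton_restrict {β : Type*} (s : Finset ι) (f : ι → β) :
    s.restrict (π := fun _ => β) ⁻¹' {s.restrict f} = {ω | ∀ x ∈ s, ω x = f x} := by
  ext ω
  simp [funext_iff]

theorem measurableSet_forall_mem_eq {β : Type*} [MeasurableSpace β] [MeasurableSingletonClass β]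
    (s : Finset ι) (f : ι → β) : MeasurableSet {ω : ι → β | ∀ x ∈ s, ω x = f x} :=
  restrict_preimage_singleton_restrict s f ▸
    s.measurable_restrict (measurableSet_singleton (s.restrict f))

theorem IsBernoulli.unique {P Q : Measure (ι → Bool)} (hP : IsBernoulli p P)
    (hQ : IsBernoulli p Q) : P = Q := by
  have := hP.1
  have := hQ.1
  -- Both measures are the projective limit of the finite-dimensional marginals of `Q`.
  refine IsProjectiveLimit.unique (P := fun s : Finset ι => Q.map s.restrict) (fun s => ?_)
    (fun _ => rfl)
  refine Measure.ext_of_singleton fun g => ?_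
  obtain ⟨f, rfl⟩ : ∃ f : ι → Bool, s.restrict f = g :=
    Subtype.val_injective.surjective_comp_right g
  rw [Measure.map_apply s.measurable_restrict (measurableSet_singleton _),
    Measure.map_apply s.measurable_restrict (measurableSet_singleton _),
    restrict_preimage_singleton_restrict, hP.2, hQ.2]

theorem measurable_comp_right {β : Type*} [MeasurableSpace β] (e : κ → ι) :
    Measurable fun ω : ι → β => ω ∘ e :=
  measurable_pi_lambda _ fun x => measurable_pi_apply (e x)

theorem IsBernoulli.map_comp {P : Measure (ι → Bool)} (hP : IsBernoulli p P) {e : κ → ι}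
    (he : e.Injective) : IsBernoulli p (P.map fun ω => ω ∘ e) := by
  have := hP.1
  refine ⟨Measure.isProbabilityMeasure_map (measurable_comp_right e).aemeasurable, fun s f => ?_⟩
  have hpre : (fun ω : ι → Bool => ω ∘ e) ⁻¹' {ω | ∀ x ∈ s, ω x = f x} =
      {ω | ∀ y ∈ s.map ⟨e, he⟩, ω y = Function.extend e f (fun _ => false) y} := by
    ext ω
    simp [he.extend_apply]
  rw [Measure.map_apply (measurable_comp_right e) (measurableSet_forall_mem_eq s f), hpre, hP.2,
    Finset.prod_map]
  simp only [Function.Embedding.coeFn_mk, he.extend_apply]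

theorem IsBernoulli.measurePreserving_comp {P : Measure (ι → Bool)} {Q : Measure (κ → Bool)}
    (hP : IsBernoulli p P) (hQ : IsBernoulli p Q) {e : κ → ι} (he : e.Injective) :
    MeasurePreserving (fun ω => ω ∘ e) P Q :=
  ⟨measurable_comp_right e, (hP.map_comp he).unique hQ⟩

end Bernoulli

theorem sum_apply_extend_zero {ι κ M N : Type*} [Fintype ι] [Fintype κ] [Zero M]
    [AddCommMonoid N] {e : κ → ι} (he : e.Injective) (x : κ → M) {f : ι → M → N}
    (hf : ∀ i, f i 0 = 0) : ∑ i, f i (Function.extend e x 0 i) = ∑ i, f (e i) (x i) := by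
  refine (Fintype.sum_of_injective e he _ _ (fun i hi => ?_) fun i => ?_).symm
  · rw [Function.extend_apply' _ _ _ hi, Pi.zero_apply, hf]
  · rw [he.extend_apply]

section CoordinateSubspace

variable {d d' : ℕ} {e : Fin d → Fin d'}

theorem sum_abs_extend_sub_extend (he : e.Injective) (x y : Fin d → ℤ) :
    ∑ i, |Function.extend e x 0 i - Function.extend e y 0 i| = ∑ i, |x i - y i| := by
  have hsub (i : Fin d') : Function.extend e x 0 i - Function.extend e y 0 i =
      Function.extend e (x - y) 0 i := by
    rw [← Pi.sub_apply, ← Function.extend_sub, sub_zero]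
  simp only [hsub]
  exact sum_apply_extend_zero he (x - y) (f := fun _ t => |t|) fun _ => abs_zero

theorem IsLipschitzFn.comp_extend_zero {F : (Fin d' → ℤ) → ℤ} (hF : IsLipschitzFn F)
    (he : e.Injective) : IsLipschitzFn fun x => F (Function.extend e x 0) :=
  fun x y hxy => hF _ _ ((sum_abs_extend_sub_extend he x y).trans hxy)

theorem planeHt_extend_zero (he : e.Injective) (α : ℝ) (η : Fin d' → ℤ) (x : Fin d → ℤ) :
    planeHt α η (Function.extend e x 0) = planeHt α (η ∘ e) x := by
  unfold planeHt
  rw [sum_apply_extend_zero he x (f := fun i t => (η i : ℝ) * (t : ℝ)) fun _ => by simp]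
  rfl

/-- The embedding of `ℤ^{d+1}` in `ℤ^{d'+1}` as a coordinate subspace, along which environments are
restricted: the horizontal coordinate `i` is placed in position `e i`, the horizontal coordinates
outside the range of `e` vanish, and the height, which is the last coordinate, is kept. -/
noncomputable def coordEmbedding (e : Fin d → Fin d') (s : Site d) : Site d' :=
  Fin.snoc (α := fun _ => ℤ) (Function.extend e (Fin.init s) 0) (s (Fin.last d))

theorem coordEmbedding_snoc (e : Fin d → Fin d') (x : Fin d → ℤ) (h : ℤ) :
    coordEmbedding e (Fin.snoc x h) =
      Fin.snoc (α := fun _ => ℤ) (Function.extend e x 0) h := by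
  simp only [coordEmbedding, Fin.init_snoc, Fin.snoc_last]

theorem coordEmbedding_injective (he : e.Injective) : (coordEmbedding e).Injective := by
  intro s t hst
  obtain ⟨hinit, hlast⟩ := Fin.snoc_inj.mp hst
  rw [← Fin.snoc_init_self s, ← Fin.snoc_init_self t, Function.extend_injective he 0 hinit, hlast]

theorem comp_coordEmbedding_mem_LIP (he : e.Injective) {α : ℝ} {η : Fin d' → ℤ} {ω : Config d'}
    (hω : ω ∈ LIP α η) : ω ∘ coordEmbedding e ∈ LIP α (η ∘ e) := by
  obtain ⟨F, hF, hopen⟩ := hω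
  refine ⟨_, hF.comp_extend_zero he, fun x => ?_⟩
  rw [Function.comp_apply, coordEmbedding_snoc, ← planeHt_extend_zero he]
  exact hopen (Function.extend e x 0)

theorem measure_LIP_eq_zero_of_comp (he : e.Injective) {p α : ℝ} {η : Fin d' → ℤ}
    {P : Measure (Config d)} {P' : Measure (Config d')} (hP : IsBernoulli p P)
    (hP' : IsBernoulli p P') (h : P (LIP α (η ∘ e)) = 0) : P' (LIP α η) = 0 :=
  measure_mono_null (fun _ => comp_coordEmbedding_mem_LIP he)
    ((hP'.measurePreserving_comp hP
      (coordEmbedding_injective he)).quasiMeasurePreserving.preimage_null h)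

theorem critical_prob_mono_in_dimension_general (he : e.Injective) {α : ℝ} {η : Fin d' → ℤ}
    {P : ℝ → Measure (Config d)} {P' : ℝ → Measure (Config d')}
    (hP : ∀ p ∈ Set.Icc (0 : ℝ) 1, IsBernoulli p (P p))
    (hP' : ∀ p ∈ Set.Icc (0 : ℝ) 1, IsBernoulli p (P' p))
    {pc pc' : ℝ} (hpc : IsCriticalProb P α (η ∘ e) pc) (hpc' : IsCriticalProb P' α η pc') :
    pc ≤ pc' := by
  obtain ⟨⟨-, hpc_lt_one⟩, hnull, -⟩ := hpc
  obtain ⟨⟨hpc'_pos, -⟩, -, hfull'⟩ := hpc'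
  by_contra! hlt
  obtain ⟨p, hpc'p, hppc⟩ := exists_between hlt
  have hp : p ∈ Set.Icc (0 : ℝ) 1 := ⟨(hpc'_pos.trans hpc'p).le, (hppc.trans hpc_lt_one).le⟩
  have hnull' : P' p (LIP α η) = 0 :=
    measure_LIP_eq_zero_of_comp he (hP p hp) (hP' p hp) (hnull p hp.1 hppc)
  exact zero_ne_one (hnull'.symm.trans (hfull' p hpc'p hp.2))

end CoordinateSubspace

theorem etaK_succ_comp_castSucc (d k : ℕ) : etaK (d + 1) k ∘ Fin.castSucc = etaK d k := rfl

/-- Monotonicity in the dimension: `p_L(α,d,k) ≤ p_L(α,d+1,k)`. -/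
theorem critical_prob_mono_in_dimension
    {d : ℕ} (hd : 1 ≤ d) (α : ℝ) (hα : α ∈ Set.Ico (0 : ℝ) 1) (k : ℕ) (hk : k ≤ d)
    (P : (n : ℕ) → ℝ → Measure (Config n))
    (hP : ∀ n : ℕ, ∀ p ∈ Set.Icc (0 : ℝ) 1, IsBernoulli p (P n p))
    (pc pc' : ℝ) (hpc : IsCriticalProb (P d) α (etaK d k) pc)
    (hpc' : IsCriticalProb (P (d + 1)) α (etaK (d + 1) k) pc') :
    pc ≤ pc' := by
  rw [← etaK_succ_comp_castSucc] at hpc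
  exact critical_prob_mono_in_dimension_general (Fin.castSucc_injective d) (hP d) (hP (d + 1)) hpc
    hpc'
end

section
/- General lower bound: for every d ≥ 1 and every α ∈ [0,1), one has q_L(α,d,d) ≥ (1/2)·(4d)^{−1/(1−α)}. -/
open MeasureTheory Filter ENNReal

/-! Join a point to the plane by *paths* which, read from their top end, step vertically down from
closed points only and step diagonally up freely. If above every `x` the heights joined to the plane
are bounded, the first height above all of them defines an open Lipschitz surface.

Loop erasure makes the closed points of a path distinct, so a path with `n` down-steps is admissible
with probability `q ^ n`, `q = 1 - p`. When all slopes are at most `ρ < 1` in absolute value, a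
diagonal step gains height at least `1 - ρ` over the plane, a down-step loses `1`, and the whole
path from height `h` loses at least `h`. Hence, for `z > 1`, the union bound over all paths is at
most `z ^ (-h)` times a geometric series of ratio `q * z + 2 * d * z ^ (-(1 - ρ))`. With
`z ^ (1 - ρ) = 4 * d` this ratio is less than `1` as soon as `q * z < 1 / 2`, and Borel–Cantelli
then bounds the joined heights above each `x`. -/

namespace TiltedLipschitz

section Preliminaries

lemma tsum_prod_map_list {α : Type*} [Fintype α] (w : α → ℝ≥0∞) :
    ∑' l : List α, (l.map w).prod = (1 - ∑ a, w a)⁻¹ := by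
  rw [← List.equivSigmaTuple.symm.tsum_eq, ENNReal.tsum_sigma', ← ENNReal.tsum_geometric]
  refine tsum_congr fun n => ?_
  simp only [List.equivSigmaTuple, Equiv.coe_fn_symm_mk, List.map_ofFn, List.prod_ofFn,
    Function.comp_apply, tsum_fintype, Fintype.sum_pow]

lemma exists_eq_single_of_sum_abs_eq_one {ι : Type*} [Fintype ι] [DecidableEq ι] {z : ι → ℤ}
    (h : ∑ i, |z i| = 1) : ∃ (i : ι) (ε : ℤˣ), z = Pi.single i (ε : ℤ) := by
  have hsum : (Finsupp.equivFunOnFinite.symm fun i => (z i).natAbs).sum (fun _ n => n) = 1 := by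
    rw [Finsupp.sum_fintype _ _ fun _ => rfl]
    zify
    simpa using h
  obtain ⟨i, hi⟩ := (Finsupp.sum_eq_one_iff _).1 hsum
  have hz : ∀ j, (z j).natAbs = Finsupp.single i 1 j := DFunLike.congr_fun hi
  obtain ⟨ε, hε⟩ : IsUnit (z i) := Int.isUnit_iff_natAbs_eq.2 (by simpa using hz i)
  refine ⟨i, ε, funext fun j => ?_⟩
  rcases eq_or_ne j i with rfl | hj
  · simp [hε]
  · simpa [hj] using hz j

end Preliminaries

section Paths

variable {d : ℕ}

/-- A point of `ℤ^{d+1}`, split into its horizontal position in `ℤ^d` and its height. -/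
abbrev Point (d : ℕ) := (Fin d → ℤ) × ℤ

/-- A step of a path, read from the top end: `none` goes one unit down, and `some (i, ε)` goes one
unit up while moving by `ε` in the `i`-th horizontal direction. -/
abbrev Step (d : ℕ) := Option (Fin d × ℤˣ)

/-- The point reached from `v` by one step. -/
def move (v : Point d) : Step d → Point d
  | none => (v.1, v.2 - 1)
  | some (i, ε) => (v.1 + Pi.single i (ε : ℤ), v.2 + 1)

/-- The last point of the path which starts at `v` and takes the given steps. -/
def endpoint (v : Point d) (l : List (Step d)) : Point d := l.foldl move v

/-- The points from which the path starting at `v` steps down, in order. -/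
def descents (v : Point d) : List (Step d) → List (Point d)
  | [] => []
  | none :: l => v :: descents (move v none) l
  | some s :: l => descents (move v (some s)) l

/-- The path from `v` ends on the graph of `g` and steps down from points of `C` only. These are
the admissible paths of Lipschitz percolation, with `C` the set of closed points. -/
def Admissible (C : Set (Point d)) (g : (Fin d → ℤ) → ℤ) (v : Point d) (l : List (Step d)) :
    Prop :=
  (∀ w ∈ descents v l, w ∈ C) ∧ (endpoint v l).2 = g (endpoint v l).1

/-- Some admissible path joins `v` to the graph of `g`. -/
def Reachable (C : Set (Point d)) (g : (Fin d → ℤ) → ℤ) (v : Point d) : Prop :=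
  ∃ l, Admissible C g v l

variable {C : Set (Point d)} {g : (Fin d → ℤ) → ℤ} {v : Point d}

lemma admissible_none_cons {l : List (Step d)} :
    Admissible C g v (none :: l) ↔ v ∈ C ∧ Admissible C g (move v none) l := by
  simp [Admissible, descents, endpoint, and_assoc]

lemma admissible_some_cons {s : Fin d × ℤˣ} {l : List (Step d)} :
    Admissible C g v (some s :: l) ↔ Admissible C g (move v (some s)) l := by
  simp [Admissible, descents, endpoint]

lemma Admissible.exists_suffix {w : Point d} {l : List (Step d)} (hl : Admissible C g v l)
    (hw : w ∈ descents v l) : ∃ l', Admissible C g w l' ∧ descents w l' <:+ descents v l := by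
  induction l generalizing v with
  | nil => simp [descents] at hw
  | cons s l ih =>
    cases s with
    | none =>
      rcases List.mem_cons.1 hw with rfl | hw
      · exact ⟨_, hl, List.suffix_rfl⟩
      · obtain ⟨l', hl', hsuff⟩ := ih (admissible_none_cons.1 hl).2 hw
        exact ⟨l', hl', hsuff.trans (List.suffix_cons _ _)⟩
    | some s => exact ih (admissible_some_cons.1 hl) hw

/-- Loop erasure: a path which comes back to `v` is replaced by its part after that visit. -/
lemma Admissible.exists_nodup_descents {l : List (Step d)} (hl : Admissible C g v l) :
    ∃ l', Admissible C g v l' ∧ (descents v l').Nodup := by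
  induction l generalizing v with
  | nil => exact ⟨[], hl, List.nodup_nil⟩
  | cons s l ih =>
    cases s with
    | none =>
      obtain ⟨hv, hl⟩ := admissible_none_cons.1 hl
      obtain ⟨l', hl', hnodup⟩ := ih hl
      by_cases hmem : v ∈ descents (move v none) l'
      · obtain ⟨l'', hl'', hsuff⟩ := hl'.exists_suffix hmem
        exact ⟨l'', hl'', hnodup.sublist hsuff.sublist⟩
      · exact ⟨none :: l', admissible_none_cons.2 ⟨hv, hl'⟩, List.nodup_cons.2 ⟨hmem, hnodup⟩⟩
    | some s =>
      obtain ⟨l', hl', hnodup⟩ := ih (admissible_some_cons.1 hl)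
      exact ⟨some s :: l', admissible_some_cons.2 hl', hnodup⟩

lemma reachable_graph (x : Fin d → ℤ) : Reachable C g (x, g x) :=
  ⟨[], by simp [Admissible, descents, endpoint]⟩

lemma Reachable.of_move_none (h : Reachable C g (move v none)) (hv : v ∈ C) :
    Reachable C g v := by
  obtain ⟨l, hl⟩ := h
  exact ⟨none :: l, admissible_none_cons.2 ⟨hv, hl⟩⟩

lemma Reachable.of_move_some {s : Fin d × ℤˣ} (h : Reachable C g (move v (some s))) :
    Reachable C g v := by
  obtain ⟨l, hl⟩ := h
  exact ⟨some s :: l, admissible_some_cons.2 hl⟩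

lemma Reachable.of_neighbor {x y : Fin d → ℤ} {h : ℤ} (hr : Reachable C g (x, h))
    (hxy : ∑ i, |x i - y i| = 1) : Reachable C g (y, h - 1) := by
  obtain ⟨i, ε, hz⟩ := exists_eq_single_of_sum_abs_eq_one (z := x - y) hxy
  refine Reachable.of_move_some (s := (i, ε)) ?_
  simpa only [move, ← hz, add_sub_cancel, sub_add_cancel] using hr

lemma exists_isLipschitzFn_of_bddAbove (hb : ∀ x, BddAbove {h : ℤ | Reachable C g (x, h)}) :
    ∃ F : (Fin d → ℤ) → ℤ, IsLipschitzFn F ∧ ∀ x, (x, F x) ∉ C ∧ g x < F x := by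
  have hmax : ∀ x, ∃ t, IsGreatest {h : ℤ | Reachable C g (x, h)} t := fun x =>
    ⟨_, (isClosed_discrete _).isGreatest_csSup ⟨_, reachable_graph x⟩ (hb x)⟩
  choose top htop using hmax
  have hstep : ∀ x y : Fin d → ℤ, ∑ i, |x i - y i| = 1 → top x - 1 ≤ top y := fun x y hxy =>
    (htop y).2 ((htop x).1.of_neighbor hxy)
  refine ⟨fun x => top x + 1, fun x y hxy => ?_, fun x => ⟨fun hx => ?_, ?_⟩⟩
  · have hyx : ∑ i, |y i - x i| = 1 := by simpa only [abs_sub_comm] using hxy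
    rw [abs_le]
    constructor <;> linarith [hstep x y hxy, hstep y x hyx]
  · have hreach : Reachable C g (x, top x + 1) :=
      Reachable.of_move_none (by simpa [move] using (htop x).1) hx
    have := (htop x).2 hreach
    omega
  · exact Int.lt_add_one_iff.2 ((htop x).2 (reachable_graph x))

end Paths

section Weights

variable {d : ℕ} {a : Fin d → ℝ}

/-- The signed height of a point above the plane with slopes `a`. -/
def heightAbove (a : Fin d → ℝ) (v : Point d) : ℝ := v.2 - ∑ i, a i * v.1 i

/-- The weight of a step: the cost `q` of a closed point for a step down, times `z` to the power of
the loss of height above the plane. -/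
noncomputable def weight (a : Fin d → ℝ) (q z : ℝ≥0∞) : Step d → ℝ≥0∞
  | none => q * z
  | some (i, ε) => z ^ (-(1 - a i * (ε : ℤ)))

lemma heightAbove_move_none (v : Point d) :
    heightAbove a (move v none) = heightAbove a v - 1 := by
  simp only [heightAbove, move, Int.cast_sub, Int.cast_one]
  ring

lemma heightAbove_move_some (v : Point d) (i : Fin d) (ε : ℤˣ) :
    heightAbove a (move v (some (i, ε))) = heightAbove a v + (1 - a i * (ε : ℤ)) := by
  have hsingle : ∑ j, a j * ((Pi.single i (ε : ℤ) : Fin d → ℤ) j : ℝ) = a i * (ε : ℤ) := by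
    rw [Fintype.sum_eq_single i fun j hj => by simp [hj], Pi.single_eq_same]
  simp only [heightAbove, move, Pi.add_apply, Int.cast_add, Int.cast_one, mul_add,
    Finset.sum_add_distrib, hsingle]
  ring

lemma prod_weight {q z : ℝ≥0∞} (hz0 : z ≠ 0) (hz : z ≠ ∞) (v : Point d) (l : List (Step d)) :
    (l.map (weight a q z)).prod =
      q ^ (descents v l).length * z ^ (heightAbove a v - heightAbove a (endpoint v l)) := by
  induction l generalizing v with
  | nil => simp [descents, endpoint]
  | cons s l ih =>
    rw [List.map_cons, List.prod_cons, ih (move v s)]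
    rcases s with _ | ⟨i, ε⟩
    · have hexp : heightAbove a v - heightAbove a (endpoint v (none :: l)) =
          1 + (heightAbove a (move v none) - heightAbove a (endpoint (move v none) l)) := by
        rw [heightAbove_move_none, endpoint, List.foldl_cons, ← endpoint]
        ring
      rw [hexp, ENNReal.rpow_add _ _ hz0 hz, ENNReal.rpow_one]
      simp only [weight, descents, List.length_cons]
      ring
    · have hexp : heightAbove a v - heightAbove a (endpoint v (some (i, ε) :: l)) =
          -(1 - a i * (ε : ℤ)) + (heightAbove a (move v (some (i, ε))) -
            heightAbove a (endpoint (move v (some (i, ε))) l)) := by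
        rw [heightAbove_move_some, endpoint, List.foldl_cons, ← endpoint]
        ring
      rw [hexp, ENNReal.rpow_add _ _ hz0 hz]
      simp only [weight, descents]
      ring

lemma sum_weight_le {q z : ℝ≥0∞} {ρ : ℝ} (hz : 1 ≤ z) (ha : ∀ i, |a i| ≤ ρ) :
    ∑ s, weight a q z s ≤ q * z + 2 * d * z ^ (-(1 - ρ)) := by
  have hdiag : ∀ s : Fin d × ℤˣ, weight a q z (some s) ≤ z ^ (-(1 - ρ)) := fun ⟨i, ε⟩ => by
    have hslope : a i * (ε : ℤ) ≤ ρ := calc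
      a i * (ε : ℤ) ≤ |a i * (ε : ℤ)| := le_abs_self _
      _ = |a i| := by rw [abs_mul, abs_unit_intCast, mul_one]
      _ ≤ ρ := ha i
    exact ENNReal.rpow_le_rpow_of_exponent_le hz (by linarith)
  rw [Fintype.sum_option]
  refine add_le_add le_rfl ((Finset.sum_le_card_nsmul _ _ _ fun s _ => hdiag s).trans_eq ?_)
  rw [Finset.card_univ, Fintype.card_prod, Fintype.card_fin, Fintype.card_units_int, nsmul_eq_mul,
    Nat.cast_mul, Nat.cast_ofNat, mul_comm (d : ℝ≥0∞)]

end Weights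

section Percolation

variable {d : ℕ} {p : ℝ} {P : Measure (Config d)} {a : Fin d → ℝ} {g : (Fin d → ℤ) → ℤ}
  {z : ℝ≥0∞}

/-- The site of `ℤ^{d+1}` corresponding to a point of `ℤ^d × ℤ`. -/
def toSite (v : Point d) : Site d := Fin.snoc v.1 v.2

lemma toSite_injective : Function.Injective (toSite (d := d)) := fun _ _ h =>
  Prod.ext_iff.2 (Fin.snoc_injective2 h)

/-- The closed points of a configuration. -/
def closedPoints (ω : Config d) : Set (Point d) := {v | ω (toSite v) = false}

lemma measure_forall_eq_false {ι : Type*} {p : ℝ} {P : Measure (ι → Bool)}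
    (hP : IsBernoulli p P) (s : Finset ι) :
    P {ω | ∀ x ∈ s, ω x = false} = ENNReal.ofReal (1 - p) ^ s.card := by
  simpa using hP.2 s fun _ => false

lemma measure_forall_mem_closedPoints (hP : IsBernoulli p P) {L : List (Point d)}
    (hL : L.Nodup) :
    P {ω | ∀ w ∈ L, w ∈ closedPoints ω} = ENNReal.ofReal (1 - p) ^ L.length := by
  classical
  have h := measure_forall_eq_false hP (L.map toSite).toFinset
  rw [List.toFinset_card_of_nodup (hL.map toSite_injective), List.length_map] at h
  simpa only [List.mem_toFinset, List.forall_mem_map, closedPoints, Set.mem_ofPred_eq] using h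

lemma measure_admissible_le (hP : IsBernoulli p P) (hz1 : 1 ≤ z) (hz : z ≠ ∞)
    (hg : ∀ x, (g x : ℝ) ≤ ∑ i, a i * x i) {v : Point d} {l : List (Step d)}
    (hl : (descents v l).Nodup) :
    P {ω | Admissible (closedPoints ω) g v l} ≤
      z ^ (-heightAbove a v) * (l.map (weight a (ENNReal.ofReal (1 - p)) z)).prod := by
  have hz0 : z ≠ 0 := (zero_lt_one.trans_le hz1).ne'
  by_cases hend : (endpoint v l).2 = g (endpoint v l).1
  · have hheight : heightAbove a (endpoint v l) ≤ 0 := by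
      rw [heightAbove, hend]
      linarith [hg (endpoint v l).1]
    calc P {ω | Admissible (closedPoints ω) g v l}
        ≤ P {ω | ∀ w ∈ descents v l, w ∈ closedPoints ω} := measure_mono fun ω hω => hω.1
      _ = ENNReal.ofReal (1 - p) ^ (descents v l).length :=
        measure_forall_mem_closedPoints hP hl
      _ ≤ ENNReal.ofReal (1 - p) ^ (descents v l).length *
          z ^ (-heightAbove a (endpoint v l)) := by
        refine le_mul_of_one_le_right' ?_
        simpa only [ENNReal.rpow_zero] using
          ENNReal.rpow_le_rpow_of_exponent_le hz1 (neg_nonneg.2 hheight)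
      _ = z ^ (-heightAbove a v) * (l.map (weight a (ENNReal.ofReal (1 - p)) z)).prod := by
        rw [prod_weight hz0 hz v l, mul_left_comm, ← ENNReal.rpow_add _ _ hz0 hz]
        congr 2
        ring
  · simp [Admissible, hend]

lemma measure_reachable_le (hP : IsBernoulli p P) (hz1 : 1 ≤ z) (hz : z ≠ ∞)
    (hg : ∀ x, (g x : ℝ) ≤ ∑ i, a i * x i) (v : Point d) :
    P {ω | Reachable (closedPoints ω) g v} ≤
      z ^ (-heightAbove a v) * (1 - ∑ s, weight a (ENNReal.ofReal (1 - p)) z s)⁻¹ := by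
  let paths : Set (List (Step d)) := {l | (descents v l).Nodup}
  let bound (l : List (Step d)) : ℝ≥0∞ :=
    z ^ (-heightAbove a v) * (l.map (weight a (ENNReal.ofReal (1 - p)) z)).prod
  have hcover : {ω | Reachable (closedPoints ω) g v} ⊆
      ⋃ l ∈ paths, {ω | Admissible (closedPoints ω) g v l} := by
    rintro ω ⟨l, hl⟩
    obtain ⟨l', hl', hnodup⟩ := hl.exists_nodup_descents
    exact Set.mem_biUnion hnodup hl'
  calc P {ω | Reachable (closedPoints ω) g v}
      ≤ P (⋃ l ∈ paths, {ω | Admissible (closedPoints ω) g v l}) := measure_mono hcover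
    _ ≤ ∑' l : paths, P {ω | Admissible (closedPoints ω) g v l} :=
      measure_biUnion_le _ (Set.to_countable _) _
    _ ≤ ∑' l : paths, bound l :=
      ENNReal.tsum_le_tsum fun l => measure_admissible_le hP hz1 hz hg l.2
    _ ≤ ∑' l, bound l := ENNReal.tsum_comp_le_tsum_of_injective Subtype.val_injective _
    _ = _ := by rw [ENNReal.tsum_mul_left, tsum_prod_map_list]

lemma tsum_measure_reachable_ne_top (hP : IsBernoulli p P) (hz1 : 1 < z) (hz : z ≠ ∞)
    (hg : ∀ x, (g x : ℝ) ≤ ∑ i, a i * x i)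
    (hsum : ∑ s, weight a (ENNReal.ofReal (1 - p)) z s < 1) (x : Fin d → ℤ) :
    ∑' n : ℕ, P {ω | Reachable (closedPoints ω) g (x, n)} ≠ ∞ := by
  have hz0 : z ≠ 0 := (zero_lt_one.trans hz1).ne'
  have hheight : ∀ n : ℕ,
      z ^ (-heightAbove a (x, (n : ℤ))) = z ^ (∑ i, a i * x i) * z⁻¹ ^ n := fun n => by
    rw [heightAbove, neg_sub, ENNReal.rpow_sub _ _ hz0 hz, Int.cast_natCast,
      ENNReal.rpow_natCast, div_eq_mul_inv, ENNReal.inv_pow]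
  have hinv : ∀ r : ℝ≥0∞, r < 1 → (1 - r)⁻¹ ≠ ∞ := fun r hr =>
    ENNReal.inv_ne_top.2 (tsub_pos_of_lt hr).ne'
  refine ne_top_of_le_ne_top ?_ (ENNReal.tsum_le_tsum fun n : ℕ =>
    measure_reachable_le hP hz1.le hz hg (x, (n : ℤ)))
  simp only [hheight]
  rw [ENNReal.tsum_mul_right, ENNReal.tsum_mul_left, ENNReal.tsum_geometric]
  exact ENNReal.mul_ne_top (ENNReal.mul_ne_top (ENNReal.rpow_ne_top_of_ne_zero hz0 hz)
    (hinv _ (ENNReal.inv_lt_one.2 hz1))) (hinv _ hsum)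

lemma ae_bddAbove_reachable (hP : IsBernoulli p P) (hz1 : 1 < z) (hz : z ≠ ∞)
    (hg : ∀ x, (g x : ℝ) ≤ ∑ i, a i * x i)
    (hsum : ∑ s, weight a (ENNReal.ofReal (1 - p)) z s < 1) (x : Fin d → ℤ) :
    ∀ᵐ ω ∂P, BddAbove {h : ℤ | Reachable (closedPoints ω) g (x, h)} := by
  filter_upwards [ae_eventually_notMem (tsum_measure_reachable_ne_top hP hz1 hz hg hsum x)]
    with ω hω
  obtain ⟨N, hN⟩ := eventually_atTop.1 hω
  refine ⟨N, fun h hh => ?_⟩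
  by_contra! hlt
  lift h to ℕ using by omega
  exact hN h (by omega) hh

lemma ae_exists_isLipschitzFn (hP : IsBernoulli p P) (hz1 : 1 < z) (hz : z ≠ ∞)
    (hg : ∀ x, (g x : ℝ) ≤ ∑ i, a i * x i)
    (hsum : ∑ s, weight a (ENNReal.ofReal (1 - p)) z s < 1) :
    ∀ᵐ ω ∂P, ∃ F : (Fin d → ℤ) → ℤ, IsLipschitzFn F ∧
      ∀ x, ω (Fin.snoc x (F x)) = true ∧ g x < F x := by
  filter_upwards [ae_all_iff.2 (ae_bddAbove_reachable hP hz1 hz hg hsum)] with ω hω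
  simpa [closedPoints, toSite] using exists_isLipschitzFn_of_bddAbove hω

end Percolation

section CriticalProbability

variable {d : ℕ}

lemma exists_sum_weight_lt_one (hd : 1 ≤ d) {a : Fin d → ℝ} {ρ : ℝ} (hρ : ρ < 1)
    (ha : ∀ i, |a i| ≤ ρ) {q : ℝ≥0∞} (hq : q < 2⁻¹ * (4 * d) ^ (-(1 / (1 - ρ)))) :
    ∃ z : ℝ≥0∞, 1 < z ∧ z ≠ ∞ ∧ ∑ s, weight a q z s < 1 := by
  have hd0 : (d : ℝ≥0∞) ≠ 0 := Nat.cast_ne_zero.2 (by omega)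
  have h4d : (1 : ℝ≥0∞) < 4 * d := by exact_mod_cast (by omega : 1 < 4 * d)
  have hpos : 0 < 1 / (1 - ρ) := one_div_pos.2 (sub_pos.2 hρ)
  let z : ℝ≥0∞ := (4 * d) ^ (1 / (1 - ρ))
  have hz1 : 1 < z := ENNReal.one_lt_rpow h4d hpos
  have hdown : q * z < 2⁻¹ := by
    refine ENNReal.mul_lt_of_lt_div ?_
    rwa [div_eq_mul_inv, ← ENNReal.rpow_neg]
  have hdiag : 2 * d * z ^ (-(1 - ρ)) = 2⁻¹ := by
    rw [← ENNReal.rpow_mul, mul_neg, one_div_mul_cancel (sub_pos.2 hρ).ne', ENNReal.rpow_neg_one]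
    have htop : (2 * d : ℝ≥0∞) ≠ ∞ := by finiteness
    rw [show (4 * d : ℝ≥0∞) = 2 * d * 2 by ring, ENNReal.mul_inv (Or.inr (by finiteness))
      (Or.inl htop), ← mul_assoc, ENNReal.mul_inv_cancel (by simpa using hd0) htop, one_mul]
  refine ⟨z, hz1, ENNReal.rpow_ne_top_of_nonneg hpos.le (by finiteness), ?_⟩
  calc ∑ s, weight a q z s ≤ q * z + 2 * d * z ^ (-(1 - ρ)) := sum_weight_le hz1.le ha
    _ < 2⁻¹ + 2⁻¹ := by
      rw [hdiag]
      exact ENNReal.add_lt_add_of_lt_of_le (by finiteness) hdown le_rfl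
    _ = 1 := ENNReal.inv_two_add_inv_two

lemma ae_mem_LIP (hd : 1 ≤ d) {α ρ p : ℝ} {η : Fin d → ℤ} (hρ : ρ < 1)
    (hη : ∀ i, |α * η i| ≤ ρ) {P : Measure (Config d)} (hP : IsBernoulli p P)
    (hp : 1 - p < 1 / 2 * (4 * d : ℝ) ^ (-(1 / (1 - ρ)))) :
    ∀ᵐ ω ∂P, ω ∈ LIP α η := by
  have hplane : ∀ x : Fin d → ℤ, (planeHt α η x : ℝ) ≤ ∑ i, α * η i * x i := fun x =>
    (Int.floor_le _).trans_eq (by simp only [Finset.mul_sum, mul_assoc])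
  have hd0 : (0 : ℝ) < 4 * d := by
    have : (1 : ℝ) ≤ d := by exact_mod_cast hd
    linarith
  have hq : ENNReal.ofReal (1 - p) < 2⁻¹ * (4 * d) ^ (-(1 / (1 - ρ))) := by
    have hrhs := (ENNReal.ofReal_lt_ofReal_iff (by positivity)).2 hp
    rwa [ENNReal.ofReal_mul (by norm_num), ← ENNReal.ofReal_rpow_of_pos hd0,
      ENNReal.ofReal_mul (by norm_num), ENNReal.ofReal_natCast, ENNReal.ofReal_ofNat, one_div,
      ENNReal.ofReal_inv_of_pos two_pos, ENNReal.ofReal_ofNat] at hrhs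
  obtain ⟨z, hz1, hz, hsum⟩ := exists_sum_weight_lt_one hd hρ hη hq
  exact ae_exists_isLipschitzFn hP hz1 hz hplane hsum

end CriticalProbability

end TiltedLipschitz

theorem qL_general_lower_bound_general {d : ℕ} (hd : 1 ≤ d) {α ρ : ℝ} (hρ : ρ < 1)
    {η : Fin d → ℤ} (hη : ∀ i, |α * η i| ≤ ρ)
    {P : ℝ → Measure (Config d)} (hP : ∀ p ∈ Set.Icc (0 : ℝ) 1, IsBernoulli p (P p))
    {pc : ℝ} (hpc : IsCriticalProb P α η pc) :
    1 - pc ≥ (1 / 2) * (4 * d : ℝ) ^ (-(1 / (1 - ρ))) := by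
  obtain ⟨⟨hpc0, hpc1⟩, hbelow, -⟩ := hpc
  by_contra! hlt
  obtain ⟨p, hmax, hppc⟩ := exists_between (max_lt hpc0 (sub_lt_comm.1 hlt))
  obtain ⟨hp0, hp⟩ := max_lt_iff.1 hmax
  have hBernoulli := hP p ⟨hp0.le, (hppc.trans hpc1).le⟩
  have : IsProbabilityMeasure (P p) := hBernoulli.1
  have hsurface : ∀ᵐ ω ∂P p, ω ∈ LIP α η :=
    TiltedLipschitz.ae_mem_LIP hd hρ hη hBernoulli (sub_lt_comm.1 hp)
  have hno_surface : ∀ᵐ ω ∂P p, ω ∉ LIP α η :=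
    measure_eq_zero_iff_ae_notMem.1 (hbelow p hp0.le hppc)
  obtain ⟨ω, hmem, hnotMem⟩ := (hsurface.and hno_surface).exists
  exact hnotMem hmem

/-- General lower bound: for all `d ≥ 1` and `α ∈ [0,1)`,
`q_L(α,d,d) = 1 − p_L(α,d,d) ≥ (1/2)·(4d)^{−1/(1−α)}`. -/
theorem qL_general_lower_bound
    {d : ℕ} (hd : 1 ≤ d) (α : ℝ) (hα : α ∈ Set.Ico (0 : ℝ) 1)
    (P : ℝ → Measure (Config d)) (hP : ∀ p ∈ Set.Icc (0 : ℝ) 1, IsBernoulli p (P p))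
    (pc : ℝ) (hpc : IsCriticalProb P α (etaK d d) pc) :
    1 - pc ≥ (1 / 2) * ((4 * d : ℝ)) ^ (-(1 / (1 - α))) := by
  exact qL_general_lower_bound_general hd hα.2
    (fun i => by simp [etaK, abs_of_nonneg hα.1]) hP hpc
end
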